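/- Let I = (a,b) be a bounded open interval, p : I → ℝ a bounded Lebesgue-measurable function, and ρ ∈ L¹(I). Suppose (λ_j) is a sequence of distinct points in (0,∞) with a cluster point λ₀ ∈ (0,∞) such that ∫_a^b λ_j^{p(x)} ρ(x) dx = 0 for every j. Then the conditional expectation of ρ with respect to σ(p) vanishes almost everywhere; equivalently, ∫_A ρ(x) dx = 0 for every A ∈ σ(p). -/

import Mathlib

/-!
The measure `ρ dx` on `I` is a difference of two finite positive measures `μ₊ = ρ⁺ dx` and
`μ₋ = ρ⁻ dx`. Since `p` is bounded on `I`, the complex moment-generating functions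
`z ↦ ∫ exp (z p) dμ±` are entire, and because `λ ^ p = exp (p log λ)` on `(0, ∞)`, the hypothesis
says that they agree at the distinct points `log λ_j`, which accumulate at `log λ₀`. By the
identity theorem they agree everywhere, so `p` has the same law under `μ₊` and `μ₋`
(`map_eq_map_of_mgf_eq_on_sequence`). Hence `∫ ρ = 0` over each set `p ⁻¹' B`. Every set in
`σ(p)` is almost everywhere equal to one of these (`exists_preimage_ae_eq_of_sigmaP`), which gives
the vanishing on `σ(p)`, and then that of the conditional expectation by its characterization.
-/


open MeasureTheory Set

/-- `σ(p)`: the smallest sigma-algebra on `I = (a,b)` (realized on `ℝ` carrying the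
measure `volume.restrict (Ioo a b)`) that makes `p` measurable and contains the
(measurable) sets of Lebesgue measure zero. -/
def sigmaP (a b : ℝ) (p : ℝ → ℝ) : MeasurableSpace ℝ :=
  MeasurableSpace.comap p Real.measurableSpace ⊔
    MeasurableSpace.generateFrom
      {s : Set ℝ | MeasurableSet s ∧ MeasureTheory.volume.restrict (Set.Ioo a b) s = 0}

section SignedDensity

variable {Ω : Type*} [MeasurableSpace Ω] {μ : Measure Ω}

/-- Integration against the signed density `ρ` is the difference of the integrals against the
positive measures with densities `ρ⁺` and `ρ⁻` (`ENNReal.ofReal` truncates negative values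
to `0`). -/
lemma integral_mul_eq_sub_withDensity {ρ f : Ω → ℝ} (hρ : Integrable ρ μ)
    (hf₁ : Integrable f (μ.withDensity fun x => ENNReal.ofReal (ρ x)))
    (hf₂ : Integrable f (μ.withDensity fun x => ENNReal.ofReal (-ρ x))) :
    ∫ x, f x * ρ x ∂μ = ∫ x, f x ∂(μ.withDensity fun x => ENNReal.ofReal (ρ x))
      - ∫ x, f x ∂(μ.withDensity fun x => ENNReal.ofReal (-ρ x)) := by
  have hm₁ : AEMeasurable (fun x => ENNReal.ofReal (ρ x)) μ := hρ.aemeasurable.ennreal_ofReal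
  have hm₂ : AEMeasurable (fun x => ENNReal.ofReal (-ρ x)) μ := hρ.aemeasurable.neg.ennreal_ofReal
  have ht₁ : ∀ᵐ x ∂μ, ENNReal.ofReal (ρ x) < ⊤ := ae_of_all _ fun _ => ENNReal.ofReal_lt_top
  have ht₂ : ∀ᵐ x ∂μ, ENNReal.ofReal (-ρ x) < ⊤ := ae_of_all _ fun _ => ENNReal.ofReal_lt_top
  rw [integral_withDensity_eq_integral_toReal_smul₀ hm₁ ht₁,
    integral_withDensity_eq_integral_toReal_smul₀ hm₂ ht₂, ← integral_sub
      ((integrable_withDensity_iff_integrable_smul₀' hm₁ ht₁).1 hf₁)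
      ((integrable_withDensity_iff_integrable_smul₀' hm₂ ht₂).1 hf₂)]
  refine integral_congr_ae (ae_of_all _ fun x => ?_)
  simp only [smul_eq_mul]
  rw [← sub_mul, ENNReal.toReal_ofReal', ENNReal.toReal_ofReal']
  rcases le_total 0 (ρ x) with h | h
  · rw [max_eq_left h, max_eq_right (by linarith)]; ring
  · rw [max_eq_right h, max_eq_left (by linarith)]; ring

end SignedDensity

/-- If the moment-generating functions of an essentially bounded `X` under two finite measures
agree along a sequence of points accumulating at `t₀`, then `X` has the same law under both:
the complex moment-generating functions are entire, so the identity theorem applies, and they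
determine the law. -/
lemma map_eq_map_of_mgf_eq_on_sequence {Ω : Type*} [MeasurableSpace Ω] {μ ν : Measure Ω}
    [IsFiniteMeasure μ] [IsFiniteMeasure ν] {X : Ω → ℝ} (hX : Measurable X) {C : ℝ}
    (hμ : ∀ᵐ x ∂μ, X x ∈ Icc (-C) C) (hν : ∀ᵐ x ∂ν, X x ∈ Icc (-C) C)
    {t : ℕ → ℝ} {t₀ : ℝ} (ht : Filter.Tendsto t Filter.atTop (nhdsWithin t₀ {t₀}ᶜ))
    (h : ∀ n, ProbabilityTheory.mgf X μ (t n) = ProbabilityTheory.mgf X ν (t n)) :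
    μ.map X = ν.map X := by
  have entire : ∀ {κ : Measure Ω} [IsFiniteMeasure κ], (∀ᵐ x ∂κ, X x ∈ Icc (-C) C) →
      AnalyticOnNhd ℂ (ProbabilityTheory.complexMGF X κ) univ := by
    intro κ _ hκ z _
    apply ProbabilityTheory.analyticAt_complexMGF
    have : ProbabilityTheory.integrableExpSet X κ = univ := eq_univ_of_forall fun s =>
      ProbabilityTheory.integrable_exp_mul_of_mem_Icc hX.aemeasurable hκ
    simp [this]
  apply Measure.ext_of_complexMGF_eq hX.aemeasurable hX.aemeasurable
  have htC : Filter.Tendsto (fun n => (t n : ℂ)) Filter.atTop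
      (nhdsWithin (t₀ : ℂ) {(t₀ : ℂ)}ᶜ) := by
    rw [tendsto_nhdsWithin_iff] at ht ⊢
    refine ⟨(Complex.continuous_ofReal.tendsto t₀).comp ht.1, ?_⟩
    filter_upwards [ht.2] with n hn
    simpa using hn
  have hfreq := htC.frequently (p := fun z => ProbabilityTheory.complexMGF X μ z =
      ProbabilityTheory.complexMGF X ν z) (Filter.Frequently.of_forall fun n => by
    rw [ProbabilityTheory.complexMGF_ofReal, ProbabilityTheory.complexMGF_ofReal, h n])
  funext z
  exact (entire hμ).eqOn_of_preconnected_of_frequently_eq (entire hν) isPreconnected_univ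
    (mem_univ _) hfreq (mem_univ z)

lemma sigmaP_le {a b : ℝ} {p : ℝ → ℝ} (hp : Measurable p) :
    sigmaP a b p ≤ Real.measurableSpace :=
  sup_le hp.comap_le (MeasurableSpace.generateFrom_le fun _ hs => hs.1)

/-- Adjoining null sets changes the sets `p ⁻¹' B` only up to null sets. -/
lemma exists_preimage_ae_eq_of_sigmaP {a b : ℝ} {p : ℝ → ℝ} {A : Set ℝ}
    (hA : MeasurableSet[sigmaP a b p] A) :
    ∃ B : Set ℝ, MeasurableSet B ∧ A =ᵐ[volume.restrict (Ioo a b)] p ⁻¹' B := by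
  have hle : sigmaP a b p ≤ eventuallyMeasurableSpace (MeasurableSpace.comap p Real.measurableSpace)
      (ae (volume.restrict (Ioo a b))) := by
    refine sup_le le_eventuallyMeasurableSpace (MeasurableSpace.generateFrom_le fun s hs => ?_)
    exact ⟨∅, @MeasurableSet.empty _ (MeasurableSpace.comap p _), ae_eq_empty.2 hs.2⟩
  obtain ⟨_, ⟨B, hB, rfl⟩, hAB⟩ := hle A hA
  exact ⟨B, hB, hAB⟩

/-- If `ρ ∈ L¹((a,b))` and the data `∫_a^b λ_j^{p(x)} ρ(x) dx` vanishes along a sequence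
of distinct points `λ_j ∈ (0,∞)` with a cluster point `λ₀ ∈ (0,∞)`, then the
conditional expectation of `ρ` with respect to `σ(p)` vanishes a.e.; equivalently,
`∫_A ρ = 0` for every `A ∈ σ(p)`. -/
theorem condexp_eq_zero_of_data_eq_zero_on_sequence (a b : ℝ) (hab : a < b)
    (p ρ : ℝ → ℝ) (hp : Measurable p)
    (hpbdd : ∃ C : ℝ, ∀ x ∈ Set.Ioo a b, |p x| ≤ C)
    (hρ : Integrable ρ (volume.restrict (Set.Ioo a b)))
    (lam : ℕ → ℝ) (hdist : Function.Injective lam) (hpos : ∀ j, 0 < lam j)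
    (l₀ : ℝ) (hl₀ : 0 < l₀)
    (hcluster : ∃ φ : ℕ → ℕ, StrictMono φ ∧
      Filter.Tendsto (lam ∘ φ) Filter.atTop (nhds l₀))
    (hD : ∀ j, ∫ x in Set.Ioo a b, lam j ^ p x * ρ x = 0) :
    ((volume.restrict (Set.Ioo a b))[ρ | sigmaP a b p]
        =ᵐ[volume.restrict (Set.Ioo a b)] 0) ∧
    ∀ A : Set ℝ, MeasurableSet[sigmaP a b p] A →
      ∫ x in A, ρ x ∂(volume.restrict (Set.Ioo a b)) = 0 := by
  obtain ⟨C, hC⟩ := hpbdd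
  obtain ⟨φ, hφ, hlim⟩ := hcluster
  set μ := volume.restrict (Ioo a b)
  have hfin₁ : IsFiniteMeasure (μ.withDensity fun x => ENNReal.ofReal (ρ x)) :=
    isFiniteMeasure_withDensity_ofReal hρ.2
  have hfin₂ : IsFiniteMeasure (μ.withDensity fun x => ENNReal.ofReal (-ρ x)) :=
    isFiniteMeasure_withDensity_ofReal hρ.neg.2
  have hpC : ∀ᵐ x ∂μ, p x ∈ Icc (-C) C := by
    filter_upwards [ae_restrict_mem measurableSet_Ioo] with x hx
    exact abs_le.1 (hC x hx)
  have hpC₁ := (withDensity_absolutelyContinuous μ fun x => ENNReal.ofReal (ρ x)).ae_le hpC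
  have hpC₂ := (withDensity_absolutelyContinuous μ fun x => ENNReal.ofReal (-ρ x)).ae_le hpC
  have hlog : Filter.Tendsto (fun n => Real.log (lam (φ n))) Filter.atTop
      (nhdsWithin (Real.log l₀) {Real.log l₀}ᶜ) := by
    refine tendsto_nhdsWithin_iff.2 ⟨hlim.log hl₀.ne', ?_⟩
    -- By injectivity, the subsequence takes the value `l₀` at most once.
    have hne : ∀ᶠ n in Filter.atTop, lam (φ n) ≠ l₀ := by
      rw [← Nat.cofinite_eq_atTop]
      exact (hdist.comp hφ.injective).tendsto_cofinite.eventually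
        (Set.finite_singleton l₀).eventually_cofinite_notMem
    filter_upwards [hne] with n hn h
    exact hn (Real.log_injOn_pos (hpos _) hl₀ h)
  have hmap : (μ.withDensity fun x => ENNReal.ofReal (ρ x)).map p =
      (μ.withDensity fun x => ENNReal.ofReal (-ρ x)).map p := by
    refine map_eq_map_of_mgf_eq_on_sequence hp hpC₁ hpC₂ hlog fun n => ?_
    have key := integral_mul_eq_sub_withDensity hρ
      (ProbabilityTheory.integrable_exp_mul_of_mem_Icc (t := Real.log (lam (φ n)))
        hp.aemeasurable hpC₁)
      (ProbabilityTheory.integrable_exp_mul_of_mem_Icc hp.aemeasurable hpC₂)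
    have h0 := hD (φ n)
    simp_rw [Real.rpow_def_of_pos (hpos _)] at h0
    exact sub_eq_zero.1 (key.symm.trans h0)
  have hzero : ∀ A : Set ℝ, MeasurableSet[sigmaP a b p] A → ∫ x in A, ρ x ∂μ = 0 := by
    intro A hA
    obtain ⟨B, hB, hAB⟩ := exists_preimage_ae_eq_of_sigmaP hA
    have hpB := hp hB
    have key := integral_mul_eq_sub_withDensity (f := (p ⁻¹' B).indicator 1) hρ
      ((integrable_const (1 : ℝ)).indicator hpB) ((integrable_const (1 : ℝ)).indicator hpB)
    rw [setIntegral_congr_set hAB, ← integral_indicator hpB]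
    calc ∫ x, (p ⁻¹' B).indicator ρ x ∂μ
        = ∫ x, (p ⁻¹' B).indicator 1 x * ρ x ∂μ := by
          congr 1 with x
          by_cases hx : x ∈ p ⁻¹' B <;> simp [hx]
      _ = 0 := by
          rw [key, integral_indicator_one hpB, integral_indicator_one hpB,
            ← map_measureReal_apply hp hB, ← map_measureReal_apply hp hB, hmap, sub_self]
  refine ⟨(ae_eq_condExp_of_forall_setIntegral_eq (sigmaP_le hp) hρ (fun _ _ _ => ?_)
    (fun s hs _ => ?_) ?_).symm, hzero⟩
  · exact integrableOn_zero
  · simp [hzero s hs]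
  · exact aestronglyMeasurable_zero
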